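/- Let r ∈ (1,∞) and r̂ := min(r,2). Let ς : [0,∞) → ℝ be continuous, suppose α ↦ α·ς(α) is differentiable on (0,∞), and suppose there exist ς_de ≥ 0 and ς_sm > 0 such that d/dα(α·ς(α)) ≥ ς_sm·(ς_de^r + α^r)^((r−2)/r) for all α > 0. Then there exists a constant c > 0 depending only on r such that for all real numbers α, β with 0 ≤ β ≤ α and (ς_de, α) ≠ (0, 0): α·ς(α) − β·ς(β) ≥ c·ς_sm·(ς_de^r + α^r + β^r)^((r−2)/r)·(α − β). -/

import Mathlib

open Real

/-!
Split `[b, a]` at its midpoint. On the lower half the function is nondecreasing, so that half can be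
discarded. On the upper half `t` is at least `a / 2` and at most `a`, so `D + t ^ r` is comparable,
up to the factor `(1 / 2) ^ (r + 1)`, to `D + a ^ r + b ^ r`, and hence so are their powers,
whatever the sign of the exponent. Discarding the lower half costs only a factor `2`.
-/

theorem mul_sub_le_sub_of_deriv_nonneg_of_le_deriv {f : ℝ → ℝ} {a m b C : ℝ}
    (ham : a ≤ m) (hmb : m ≤ b) (hf : ContinuousOn f (Set.Icc a b))
    (hf' : DifferentiableOn ℝ f (Set.Ioo a b)) (hnonneg : ∀ t ∈ Set.Ioo a b, 0 ≤ deriv f t)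
    (hC : ∀ t ∈ Set.Ioo m b, C ≤ deriv f t) :
    C * (b - m) ≤ f b - f a := by
  have hmono : f a ≤ f m := by
    rw [← interior_Icc] at hf' hnonneg
    exact monotoneOn_of_deriv_nonneg (convex_Icc a b) hf hf' hnonneg
      ⟨le_rfl, ham.trans hmb⟩ ⟨ham, hmb⟩ ham
  have hslope : C * (b - m) ≤ f b - f m := by
    rw [← interior_Icc] at hC
    exact (convex_Icc m b).mul_sub_le_image_sub_of_le_deriv
      (hf.mono (Set.Icc_subset_Icc_left ham))
      (hf'.mono (interior_Icc.trans_subset (Set.Ioo_subset_Ioo_left ham)))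
      hC m ⟨le_rfl, hmb⟩ b ⟨hmb, le_rfl⟩ hmb
  linarith

theorem rpow_abs_mul_rpow_le_rpow {k A B : ℝ} (hk : 0 ≤ k) (hB : 0 < B) (hkA : k * A ≤ B)
    (hBA : B ≤ A) (p : ℝ) : k ^ |p| * A ^ p ≤ B ^ p := by
  have hA : 0 < A := hB.trans_le hBA
  rcases le_total 0 p with hp | hp
  · calc k ^ |p| * A ^ p = (k * A) ^ p := by rw [abs_of_nonneg hp, mul_rpow hk hA.le]
      _ ≤ B ^ p := rpow_le_rpow (by positivity) hkA hp
  · have hk1 : k ≤ 1 := (mul_le_iff_le_one_left hA).mp (hkA.trans hBA)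
    calc k ^ |p| * A ^ p ≤ A ^ p :=
          mul_le_of_le_one_left (by positivity) (rpow_le_one hk hk1 (abs_nonneg p))
      _ ≤ B ^ p := rpow_le_rpow_of_nonpos hB hBA hp

theorem half_rpow_mul_add_rpow_le {r D a b t : ℝ} (hr : 0 ≤ r) (hD : 0 ≤ D) (hb : 0 ≤ b)
    (hba : b ≤ a) (hat : a / 2 ≤ t) :
    (1 / 2) ^ (r + 1) * (D + a ^ r + b ^ r) ≤ D + t ^ r := by
  have ha : 0 ≤ a := hb.trans hba
  calc (1 / 2) ^ (r + 1) * (D + a ^ r + b ^ r)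
      ≤ (1 / 2) ^ (r + 1) * (D + a ^ r + a ^ r) := by gcongr
    _ = (1 / 2) ^ (r + 1) * D + (a / 2) ^ r := by
      rw [rpow_add_one (by norm_num), div_eq_mul_one_div a, mul_rpow ha (by norm_num)]
      ring
    _ ≤ D + t ^ r := by
      gcongr
      exact mul_le_of_le_one_left hD (rpow_le_one (by norm_num) (by norm_num) (by linarith))

theorem half_rpow_abs_mul_add_rpow_rpow_le {r D a b t : ℝ} (hr : 0 ≤ r) (hD : 0 ≤ D) (hb : 0 ≤ b)
    (hba : b ≤ a) (ht : 0 < t) (hat : a / 2 ≤ t) (hta : t ≤ a) (p : ℝ) :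
    ((1 / 2) ^ (r + 1)) ^ |p| * (D + a ^ r + b ^ r) ^ p ≤ (D + t ^ r) ^ p := by
  have hle : D + t ^ r ≤ D + a ^ r + b ^ r :=
    calc D + t ^ r ≤ D + a ^ r := by gcongr
      _ ≤ D + a ^ r + b ^ r := le_add_of_nonneg_right (rpow_nonneg hb r)
  exact rpow_abs_mul_rpow_le_rpow (by positivity) (by positivity)
    (half_rpow_mul_add_rpow_le hr hD hb hba hat) hle p

theorem stmt2_general {r D s : ℝ} (hr : 0 ≤ r) (p : ℝ) (hD : 0 ≤ D) (hs : 0 ≤ s) {f : ℝ → ℝ}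
    (hf : ContinuousOn f (Set.Ici 0)) (hf' : DifferentiableOn ℝ f (Set.Ioi 0))
    (hderiv : ∀ t : ℝ, 0 < t → s * (D + t ^ r) ^ p ≤ deriv f t)
    {a b : ℝ} (hb : 0 ≤ b) (hba : b ≤ a) :
    ((1 / 2) ^ (r + 1)) ^ |p| / 2 * s * (D + a ^ r + b ^ r) ^ p * (a - b) ≤ f a - f b := by
  have hderiv_nonneg : ∀ t ∈ Set.Ioo b a, 0 ≤ deriv f t := fun t ht =>
    have ht0 : 0 < t := hb.trans_lt ht.1
    le_trans (by positivity) (hderiv t ht0)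
  have hderiv_upper : ∀ t ∈ Set.Ioo ((a + b) / 2) a,
      s * (((1 / 2) ^ (r + 1)) ^ |p| * (D + a ^ r + b ^ r) ^ p) ≤ deriv f t := fun t ht =>
    have ht0 : 0 < t := by linarith [ht.1]
    have hat : a / 2 ≤ t := by linarith [ht.1]
    (mul_le_mul_of_nonneg_left
      (half_rpow_abs_mul_add_rpow_rpow_le hr hD hb hba ht0 hat ht.2.le p) hs).trans (hderiv t ht0)
  calc ((1 / 2) ^ (r + 1)) ^ |p| / 2 * s * (D + a ^ r + b ^ r) ^ p * (a - b)
      = s * (((1 / 2) ^ (r + 1)) ^ |p| * (D + a ^ r + b ^ r) ^ p) * (a - (a + b) / 2) := by ring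
    _ ≤ f a - f b := mul_sub_le_sub_of_deriv_nonneg_of_le_deriv (by linarith) (by linarith)
      (hf.mono fun _ ht => hb.trans ht.1) (hf'.mono fun _ ht => hb.trans_lt ht.1)
      hderiv_nonneg hderiv_upper

/-- One-dimensional lower bound (A.4): if `α ↦ α ς(α)` has derivative bounded
below by `ς_sm (ς_de^r + α^r)^((r-2)/r)` on `(0,∞)`, then for `0 ≤ β ≤ α`
(excluding the degenerate case `ς_de = α = 0`) one has
`α ς(α) - β ς(β) ≥ c ς_sm (ς_de^r + α^r + β^r)^((r-2)/r) (α - β)`, with `c`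
depending only on `r`. -/
theorem stmt2 (r : ℝ) (hr : 1 < r) :
    ∃ c : ℝ, 0 < c ∧
      ∀ (ς : ℝ → ℝ) (ς_de ς_sm : ℝ),
        ContinuousOn ς (Set.Ici 0) →
        (∀ α : ℝ, 0 < α → DifferentiableAt ℝ (fun t : ℝ => t * ς t) α) →
        0 ≤ ς_de → 0 < ς_sm →
        (∀ α : ℝ, 0 < α →
          ς_sm * (ς_de ^ r + α ^ r) ^ ((r - 2) / r) ≤ deriv (fun t : ℝ => t * ς t) α) →
        ∀ α β : ℝ, 0 ≤ β → β ≤ α → ¬(ς_de = 0 ∧ α = 0) →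
          c * ς_sm * (ς_de ^ r + α ^ r + β ^ r) ^ ((r - 2) / r) * (α - β) ≤
            α * ς α - β * ς β :=
  ⟨((1 / 2) ^ (r + 1)) ^ |(r - 2) / r| / 2, by positivity,
    fun _ _ _ hς hd hde hsm hderiv _ _ hβ hβα _ =>
      stmt2_general (by linarith) _ (rpow_nonneg hde r) hsm.le (continuousOn_id.mul hς)
        (fun t ht => (hd t ht).differentiableWithinAt) hderiv hβ hβα⟩
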